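/- Let n ≥ 1 and let NC(2n) be the set of crossingless matchings of 2n points, i.e. noncrossing fixed-point-free involutions of Fin (2n). For d ∈ ℂ, let 𝒢_{2n}(d) be the square matrix indexed by NC(2n) with entries 𝒢_{2n}(d)_{a,b} = d^{κ(a,b)}, where κ(a,b) is half the number of orbits of the permutation a∘b on Fin (2n). Then 𝒢_{2n}(d) is invertible if and only if d is not equal to 2·cos(kπ/(m+1)) for any integers 1 ≤ k ≤ m ≤ n (equivalently, d ≠ q + q⁻¹ for every root of unity q of order at most n+1; equivalently, d is not a root of any Chebyshev polynomial of the second kind U_m with m ≤ n). -/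

import Mathlib

/-- Crossingless matchings of `2n` points: noncrossing fixed-point-free involutions
of `Fin (2n)`. -/
abbrev NoncrossingMatching (n : ℕ) : Type :=
  {σ : Equiv.Perm (Fin (2 * n)) //
    (∀ i, σ (σ i) = i) ∧ (∀ i, σ i ≠ i) ∧
    ¬∃ i j : Fin (2 * n), i < j ∧ j < σ i ∧ σ i < σ j}

noncomputable instance (n : ℕ) : Fintype (NoncrossingMatching n) :=
  Fintype.ofFinite _

noncomputable instance (n : ℕ) : DecidableEq (NoncrossingMatching n) :=
  Classical.decEq _

/-- `κ(a,b)`: the number of closed loops obtained by gluing the matching diagrams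
of `a` and `b`, which is half the number of orbits of the permutation `a ∘ b`
on `Fin (2n)`. -/
noncomputable def kappa {n : ℕ} (a b : NoncrossingMatching n) : ℕ :=
  Nat.card (MulAction.orbitRel.Quotient
    (Subgroup.zpowers (a.1 * b.1)) (Fin (2 * n))) / 2

section Chebyshev

open Polynomial

/-- The zeros of the rescaled Chebyshev polynomial `S_m` are the numbers `2 cos (kπ/(m+1))`. -/
theorem eval_chebyshev_S_eq_zero_iff (m : ℕ) (d : ℂ) :
    (Chebyshev.S ℂ m).eval d = 0 ↔
      ∃ k : ℕ, 1 ≤ k ∧ k ≤ m ∧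
        d = 2 * Complex.cos ((k : ℂ) * (Real.pi : ℂ) / ((m : ℂ) + 1)) := by
  have hU : (Chebyshev.S ℂ m).eval d = (Chebyshev.U ℂ m).eval (d / 2) := by
    rw [← Chebyshev.S_comp_two_mul_X, eval_comp]
    simp [mul_div_cancel₀]
  have hne : Chebyshev.U ℝ m ≠ 0 := fun h => by
    have := Chebyshev.U_eval_one ℝ m
    rw [h, eval_zero] at this
    norm_cast at this
  have hcard : (Chebyshev.U ℝ m).roots.card = (Chebyshev.U ℝ m).natDegree := by
    rw [Chebyshev.roots_U_real, ← Finset.card_def, Finset.card_image_of_injOn]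
    · simp
    · exact (Finset.range m).nodup_map_iff_injOn.mp (Chebyshev.roots_U_real_nodup m)
  have hroots : (Chebyshev.U ℂ m).roots = (Chebyshev.U ℝ m).roots.map Complex.ofRealHom := by
    rw [← Chebyshev.map_U Complex.ofRealHom,
      ← roots_map_of_injective_of_card_eq_natDegree Complex.ofRealHom.injective hcard]
  have hneC : Chebyshev.U ℂ m ≠ 0 := by
    rw [← Chebyshev.map_U Complex.ofRealHom]
    exact (Polynomial.map_ne_zero_iff Complex.ofRealHom.injective).2 hne
  rw [hU, ← IsRoot.def, ← mem_roots hneC, hroots, Chebyshev.roots_U_real]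
  simp only [Multiset.mem_map, Finset.mem_val, Finset.mem_image, Finset.mem_range]
  constructor
  · rintro ⟨_, ⟨k, hk, rfl⟩, h⟩
    refine ⟨k + 1, by omega, by omega, ?_⟩
    rw [eq_div_iff two_ne_zero] at h
    rw [← h]
    push_cast [Complex.ofRealHom_eq_coe]
    ring
  · rintro ⟨k, hk1, hk2, rfl⟩
    obtain ⟨k, rfl⟩ := Nat.exists_eq_add_of_le' hk1
    refine ⟨_, ⟨k, by omega, rfl⟩, ?_⟩
    push_cast [Complex.ofRealHom_eq_coe]
    ring

end Chebyshev

section JonesWenzl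

variable {A : Type*} [Ring A] [Algebra ℂ A]

/-- The value at `d` of the rescaled Chebyshev polynomial of the second kind `S_m`,
normalised by `S_0 = 1` and `S_1 = X`. -/
noncomputable def quantumInt (d : ℂ) (m : ℕ) : ℂ := (Polynomial.Chebyshev.S ℂ m).eval d

theorem quantumInt_zero (d : ℂ) : quantumInt d 0 = 1 := by simp [quantumInt]

theorem quantumInt_one (d : ℂ) : quantumInt d 1 = d := by simp [quantumInt]

theorem quantumInt_add_two (d : ℂ) (m : ℕ) :
    quantumInt d (m + 2) = d * quantumInt d (m + 1) - quantumInt d m := by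
  simp [quantumInt, Polynomial.Chebyshev.S_add_two]

/-- The first `N` members of the sequence `e` satisfy the Temperley–Lieb relations with
loop parameter `d`. -/
structure IsTemperleyLieb (d : ℂ) (N : ℕ) (e : ℕ → A) : Prop where
  mul_self : ∀ i < N, e i * e i = d • e i
  braid_up : ∀ i, i + 1 < N → e i * e (i + 1) * e i = e i
  braid_down : ∀ i, i + 1 < N → e (i + 1) * e i * e (i + 1) = e (i + 1)
  comm : ∀ i j, i + 2 ≤ j → j < N → e i * e j = e j * e i

/-- The Jones–Wenzl idempotents, built from a sequence `e` by Wenzl's recursion;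
`jonesWenzl d e k` involves `e 0, …, e (k - 1)`. -/
noncomputable def jonesWenzl (d : ℂ) (e : ℕ → A) : ℕ → A
  | 0 => 1
  | k + 1 => jonesWenzl d e k -
      (quantumInt d k / quantumInt d (k + 1)) • (jonesWenzl d e k * e k * jonesWenzl d e k)

variable {d : ℂ} {N : ℕ} {e : ℕ → A}

theorem jonesWenzl_smul_eq_self {M : Type*} [AddCommGroup M] [Module A M] (x : M) (k : ℕ)
    (hx : ∀ i < k, e i • x = 0) : jonesWenzl d e k • x = x := by
  induction k with
  | zero => simp [jonesWenzl]
  | succ k ih =>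
    have h := ih fun i hi => hx i (by omega)
    rw [jonesWenzl, sub_smul, Algebra.smul_def, mul_smul, mul_smul, mul_smul, h, hx k (by omega)]
    simp

theorem mul_jonesWenzl_eq_self (x : A) (k : ℕ) (hx : ∀ i < k, x * e i = 0) :
    x * jonesWenzl d e k = x := by
  induction k with
  | zero => simp [jonesWenzl]
  | succ k ih =>
    have h := ih fun i hi => hx i (by omega)
    rw [jonesWenzl, mul_sub, mul_smul_comm, ← mul_assoc, ← mul_assoc, h, hx k (by omega)]
    simp

theorem IsTemperleyLieb.jonesWenzl_comm (he : IsTemperleyLieb d N e) (k j : ℕ) (hkj : k < j)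
    (hj : j < N) : jonesWenzl d e k * e j = e j * jonesWenzl d e k := by
  induction k with
  | zero => simp [jonesWenzl]
  | succ k ih =>
    have h : Commute (jonesWenzl d e k) (e j) := ih (by omega)
    have h' : Commute (e k) (e j) := he.comm k j (by omega) hj
    exact h.sub_left (((h.mul_left h').mul_left h).smul_left _)

/-- The partial trace of a Jones–Wenzl idempotent. -/
theorem IsTemperleyLieb.mul_jonesWenzl_mul (he : IsTemperleyLieb d N e) (k : ℕ) (hk : k < N)
    (hd : quantumInt d k ≠ 0)
    (hq : jonesWenzl d e (k - 1) * jonesWenzl d e (k - 1) = jonesWenzl d e (k - 1)) :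
    e k * jonesWenzl d e k * e k =
      (quantumInt d (k + 1) / quantumInt d k) • (jonesWenzl d e (k - 1) * e k) := by
  cases k with
  | zero => simp [jonesWenzl, quantumInt_zero, quantumInt_one, he.mul_self 0 hk]
  | succ k =>
    rw [Nat.add_sub_cancel] at hq ⊢
    have hc := he.jonesWenzl_comm k (k + 1) (by omega) hk
    rw [jonesWenzl]
    set q := jonesWenzl d e k
    have h1 : e (k + 1) * q * e (k + 1) = d • (q * e (k + 1)) := by
      rw [← hc, mul_assoc, he.mul_self _ hk, mul_smul_comm]
    have h2 : e (k + 1) * (q * e k * q) * e (k + 1) = q * e (k + 1) := by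
      calc e (k + 1) * (q * e k * q) * e (k + 1)
          = (e (k + 1) * q) * e k * (q * e (k + 1)) := by simp only [mul_assoc]
        _ = (q * e (k + 1)) * e k * (e (k + 1) * q) := by rw [hc]
        _ = q * (e (k + 1) * e k * e (k + 1)) * q := by simp only [mul_assoc]
        _ = q * e (k + 1) := by
            rw [he.braid_down k hk, mul_assoc, ← hc, ← mul_assoc, hq]
    rw [mul_sub, sub_mul, h1, mul_smul_comm, smul_mul_assoc, h2, ← sub_smul]
    congr 1
    rw [quantumInt_add_two]
    field_simp

theorem IsTemperleyLieb.mul_jonesWenzl_eq_zero (he : IsTemperleyLieb d N e) (k : ℕ) (hk : k ≤ N)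
    (hd : ∀ i ≤ k, quantumInt d i ≠ 0) :
    (∀ i < k, e i * jonesWenzl d e k = 0) ∧ ∀ i < k, jonesWenzl d e k * e i = 0 := by
  induction k using Nat.strong_induction_on with
  | h k ih =>
  cases k with
  | zero => simp
  | succ k =>
    obtain ⟨hl, hr⟩ := ih k (by omega) (by omega) fun i hi => hd i (by omega)
    have hq := jonesWenzl_smul_eq_self (d := d) (e := e) (jonesWenzl d e (k - 1)) (k - 1)
      (ih (k - 1) (by omega) (by omega) fun i hi => hd i (by omega)).1
    have htr := he.mul_jonesWenzl_mul k (by omega) (hd k (by omega)) hq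
    have hl' : jonesWenzl d e (k - 1) * jonesWenzl d e k = jonesWenzl d e k :=
      jonesWenzl_smul_eq_self (d := d) (e := e) (jonesWenzl d e k) (k - 1)
        fun i hi => hl i (by omega)
    have hr' : jonesWenzl d e k * jonesWenzl d e (k - 1) = jonesWenzl d e k :=
      mul_jonesWenzl_eq_self _ _ fun i hi => hr i (by omega)
    have hc : jonesWenzl d e (k - 1) * e k = e k * jonesWenzl d e (k - 1) := by
      rcases Nat.eq_zero_or_pos k with rfl | h
      · simp [jonesWenzl]
      · exact he.jonesWenzl_comm _ _ (by omega) (by omega)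
    have hcancel : quantumInt d k / quantumInt d (k + 1) *
        (quantumInt d (k + 1) / quantumInt d k) = 1 := by
      have := hd k (by omega)
      have := hd (k + 1) le_rfl
      field_simp
    rw [jonesWenzl]
    set q := jonesWenzl d e k
    set r := jonesWenzl d e (k - 1)
    constructor
    · intro i hi
      rcases Nat.lt_succ_iff_lt_or_eq.1 hi with hi | rfl
      · rw [mul_sub, mul_smul_comm, ← mul_assoc, ← mul_assoc, hl i hi]
        simp
      · rw [mul_sub, mul_smul_comm, ← mul_assoc, ← mul_assoc, htr, smul_mul_assoc, smul_smul,
          hcancel, one_smul, hc, mul_assoc, hl', sub_self]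
    · intro i hi
      rcases Nat.lt_succ_iff_lt_or_eq.1 hi with hi | rfl
      · rw [sub_mul, smul_mul_assoc, mul_assoc (q * e k), hr i hi]
        simp
      · rw [sub_mul, smul_mul_assoc, mul_assoc q, mul_assoc q, htr, mul_smul_comm, smul_smul,
          hcancel, one_smul, ← mul_assoc, hr', sub_self]

end JonesWenzl

section Orbits

open Equiv

variable {α : Type*}

/-- The number of orbits of a permutation, fixed points included. -/
noncomputable def orbitCount (f : Perm α) : ℕ :=
  Nat.card (MulAction.orbitRel.Quotient (Subgroup.zpowers f) α)

theorem orbitRel_zpowers_iff (f : Perm α) (x y : α) :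
    MulAction.orbitRel (Subgroup.zpowers f) α x y ↔ f.SameCycle x y := by
  rw [MulAction.orbitRel_apply, MulAction.mem_orbit_iff, Perm.sameCycle_comm]
  constructor
  · rintro ⟨⟨_, k, rfl⟩, h⟩
    exact ⟨k, h⟩
  · rintro ⟨k, h⟩
    exact ⟨⟨_, k, rfl⟩, h⟩

theorem orbitCount_inv (f : Perm α) : orbitCount f⁻¹ = orbitCount f := by
  rw [orbitCount, Subgroup.zpowers_inv, orbitCount]

/-- A permutation moving every point inside its `f`-orbit has finer orbits than `f`. -/
theorem sameCycle_of_sameCycle_apply {f g : Perm α} (h : ∀ x, f.SameCycle x (g x)) {x y : α}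
    (hxy : g.SameCycle x y) : f.SameCycle x y := by
  have hnat : ∀ (n : ℕ) (x : α), f.SameCycle x ((g ^ n) x) := by
    intro n
    induction n with
    | zero => intro x; exact Perm.SameCycle.refl _ _
    | succ n ih => intro x; rw [pow_succ']; exact (ih x).trans (h _)
  obtain ⟨n | n, rfl⟩ := hxy
  · exact hnat n x
  · have := hnat (n + 1) ((g ^ Int.negSucc n) x)
    rw [← zpow_natCast, ← Perm.mul_apply, ← zpow_add, Int.negSucc_eq, Nat.cast_succ,
      add_neg_cancel, zpow_zero] at this
    exact this.symm

variable [DecidableEq α] [Finite α]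

theorem sameCycle_swap_mul_iff (f : Perm α) {x y z : α} (hy : y ≠ x) (hz : z ≠ x) :
    (swap x (f x) * f).SameCycle y z ↔ f.SameCycle y z := by
  set g := swap x (f x) * f with hg
  have hgx : g x = x := by simp [hg]
  have hgy : ∀ y, y ≠ x → f y ≠ x → g y = f y := fun y h1 h2 => by
    rw [hg, Perm.mul_apply, swap_apply_of_ne_of_ne h2 (f.injective.ne h1)]
  have hgy' : ∀ y, f y = x → g y = f (f y) := fun y h => by
    rw [hg, Perm.mul_apply, h, swap_apply_left]
  constructor
  · refine sameCycle_of_sameCycle_apply fun y => ?_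
    by_cases h : y = x
    · rw [h, hgx]
    by_cases h' : f y = x
    · rw [hgy' y h']
      exact ⟨2, rfl⟩
    · rw [hgy y h h']
      exact ⟨1, rfl⟩
  · intro h
    obtain ⟨n, rfl⟩ := h.exists_nat_pow_eq
    clear h
    induction n using Nat.strong_induction_on generalizing y with
    | h n ih =>
    match n with
    | 0 => exact Perm.SameCycle.refl _ _
    | n + 1 =>
      by_cases hfy : f y = x
      · match n with
        | 0 => exact absurd hfy (by simpa using hz)
        | n + 1 =>
          have hne : g y ≠ x := fun h => hy (g.injective (h.trans hgx.symm))
          have heq : (f ^ (n + 1 + 1)) y = (f ^ n) (g y) := by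
            rw [hgy' y hfy, pow_succ, pow_succ]; rfl
          rw [heq] at hz ⊢
          exact Perm.SameCycle.trans ⟨1, rfl⟩ (ih n (by omega) hne hz)
      · have heq : (f ^ (n + 1)) y = (f ^ n) (f y) := by rw [pow_succ]; rfl
        rw [heq] at hz ⊢
        exact Perm.SameCycle.trans ⟨1, hgy y hy hfy⟩ (ih n (by omega) hfy hz)

/-- Bypassing a non-fixed point `x` of `f` turns it into an additional orbit. -/
theorem orbitCount_swap_mul (f : Perm α) {x : α} (hx : f x ≠ x) :
    orbitCount (swap x (f x) * f) = orbitCount f + 1 := by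
  classical
  set g := swap x (f x) * f with hg
  have hgx : g x = x := by simp [hg]
  have hfix : ∀ y, g.SameCycle x y ↔ y = x := fun y => by
    constructor
    · rintro ⟨k, rfl⟩
      exact Perm.zpow_apply_eq_self_of_apply_eq_self hgx k
    · rintro rfl
      rfl
  let Qf := MulAction.orbitRel.Quotient (Subgroup.zpowers f) α
  let Qg := MulAction.orbitRel.Quotient (Subgroup.zpowers g) α
  have hf : ∀ a b : α, ((Quotient.mk'' a : Qf) = Quotient.mk'' b) ↔ f.SameCycle a b :=
    fun a b => Quotient.eq''.trans (orbitRel_zpowers_iff f a b)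
  have hg : ∀ a b : α, ((Quotient.mk'' a : Qg) = Quotient.mk'' b) ↔ g.SameCycle a b :=
    fun a b => Quotient.eq''.trans (orbitRel_zpowers_iff g a b)
  let rep : α → α := fun y => if y = x then f x else y
  have hrep : ∀ y, rep y ≠ x := fun y => by
    by_cases h : y = x <;> simp [rep, h, hx]
  have hrepf : ∀ y, f.SameCycle y (rep y) := fun y => by
    by_cases h : y = x
    · simp only [rep, h, if_true]; exact ⟨1, rfl⟩
    · simp only [rep, h, if_false]; rfl
  have hlift : ∀ a b : α, f.SameCycle a b → g.SameCycle (rep a) (rep b) := fun a b h =>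
    (sameCycle_swap_mul_iff f (hrep a) (hrep b)).2 (((hrepf a).symm.trans h).trans (hrepf b))
  let F : Option Qf → Qg := fun o => o.elim (Quotient.mk'' x)
    (Quotient.map' rep fun a b h => (orbitRel_zpowers_iff g _ _).2
      (hlift a b ((orbitRel_zpowers_iff f a b).1 h)))
  have hF : Function.Bijective F := by
    constructor
    · rintro (_ | a) (_ | b) h
      · rfl
      · induction b using Quotient.inductionOn'
        exact absurd ((hfix _).1 ((hg _ _).1 h)) (hrep _)
      · induction a using Quotient.inductionOn'
        exact absurd ((hfix _).1 ((hg _ _).1 h.symm)) (hrep _)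
      · induction a using Quotient.inductionOn'
        induction b using Quotient.inductionOn'
        refine congrArg some ((hf _ _).2 ?_)
        have := (sameCycle_swap_mul_iff f (hrep _) (hrep _)).1 ((hg _ _).1 h)
        exact ((hrepf _).trans this).trans (hrepf _).symm
    · intro b
      induction b using Quotient.inductionOn' with | h b => ?_
      by_cases h : b = x
      · exact ⟨none, by rw [h]; rfl⟩
      · refine ⟨some (Quotient.mk'' b), (hg _ _).2 ?_⟩
        simp only [rep, h, if_false]; rfl
  have : Finite Qf := Quotient.finite _
  rw [orbitCount, orbitCount, ← Nat.card_congr (Equiv.ofBijective F hF), Finite.card_option]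

end Orbits

section FixedPointFreeInvolutions

open Equiv

variable {α : Type*}

/-- A fixed-point-free involution, viewed as a perfect matching. -/
structure IsMatching (σ : Perm α) : Prop where
  invol : ∀ x, σ (σ x) = x
  ne : ∀ x, σ x ≠ x

theorem pow_mul_apply_ne {a b : Perm α} (ha : IsMatching a) (hb : IsMatching b) (k : ℕ) (x : α) :
    ((a * b) ^ k) x ≠ a x := by
  induction k using Nat.twoStepInduction generalizing x with
  | zero => exact (ha.ne x).symm
  | one => simpa using hb.ne x
  | more k ih _ =>
    intro h
    apply ih ((a * b) x)
    rw [pow_succ', pow_succ] at h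
    simp only [Perm.mul_apply, a.injective.eq_iff, ha.invol] at h ⊢
    rw [← hb.invol (((a * b) ^ k) _), h]

/-- Two perfect matchings of a nonempty set close up to at least one loop. -/
theorem two_le_orbitCount [Finite α] [Nonempty α] {a b : Perm α} (ha : IsMatching a)
    (hb : IsMatching b) :
    2 ≤ orbitCount (a * b) := by
  obtain ⟨x⟩ := ‹Nonempty α›
  let Q := MulAction.orbitRel.Quotient (Subgroup.zpowers (a * b)) α
  have : Finite Q := Quotient.finite _
  have : Nontrivial Q := ⟨Quotient.mk'' x, Quotient.mk'' (a x), fun h => by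
    obtain ⟨k, hk⟩ := ((orbitRel_zpowers_iff _ _ _).1 (Quotient.eq''.1 h)).exists_nat_pow_eq
    exact pow_mul_apply_ne ha hb k x hk⟩
  exact Finite.one_lt_card (α := Q)

variable [DecidableEq α]

/-- Join the points `u` and `v` in the matching `σ`, and join their former partners. -/
def joinPair (σ : Perm α) (u v : α) : Perm α := swap v (σ u) * σ * swap v (σ u)

theorem isMatching_joinPair {σ : Perm α} (h : IsMatching σ) (u v : α) :
    IsMatching (joinPair σ u v) where
  invol x := by simp [joinPair, h.invol]
  ne x hx := by
    simp only [joinPair, Perm.mul_apply, swap_apply_eq_iff] at hx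
    exact h.ne _ hx

theorem joinPair_apply {σ : Perm α} (h : IsMatching σ) {u v : α} (huv : u ≠ v) (x : α) :
    joinPair σ u v x =
      if x = u then v else if x = v then u else if x = σ u then σ v
      else if x = σ v then σ u else σ x := by
  have := h.invol; have := h.ne
  simp only [joinPair, Perm.mul_apply, swap_apply_def]
  grind

theorem joinPair_eq_self {σ : Perm α} {u v : α} (h : σ u = v) : joinPair σ u v = σ := by
  rw [joinPair, h, swap_self]
  rfl

theorem joinPair_apply_left {σ : Perm α} (h : IsMatching σ) {u v : α} (huv : u ≠ v) :
    joinPair σ u v u = v := by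
  rw [joinPair_apply h huv, if_pos rfl]

theorem joinPair_comm {σ : Perm α} (h : IsMatching σ) {u v : α} (huv : u ≠ v) :
    joinPair σ u v = joinPair σ v u := by
  ext x
  rw [joinPair_apply h huv, joinPair_apply h huv.symm]
  have := h.invol; have := h.ne
  grind

theorem joinPair_partners {σ : Perm α} (h : IsMatching σ) {u v : α} (huv : u ≠ v) :
    joinPair σ (σ v) (σ u) = joinPair σ u v := by
  ext x
  rw [joinPair_apply h huv, joinPair_apply h (σ.injective.ne huv.symm)]
  have := h.invol; have := h.ne
  grind

theorem joinPair_joinPair_of_apply_eq {σ : Perm α} (h : IsMatching σ) {u v w : α} (huv : σ u = v)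
    (hvw : v ≠ w) (huw : u ≠ w) : joinPair (joinPair σ v w) u v = σ := by
  have hne : u ≠ v := fun h' => h.ne u (huv.trans h'.symm)
  ext x
  simp only [joinPair_apply (isMatching_joinPair h v w) hne, joinPair_apply h hvw]
  have := h.invol; have := h.ne
  grind (splits := 20)

theorem joinPair_joinPair_comm {σ : Perm α} (h : IsMatching σ) {u v s t : α} (huv : u ≠ v)
    (hst : s ≠ t) (hus : u ≠ s) (hut : u ≠ t) (hvs : v ≠ s) (hvt : v ≠ t) :
    joinPair (joinPair σ u v) s t = joinPair (joinPair σ s t) u v := by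
  ext x
  simp only [joinPair_apply (isMatching_joinPair h u v) hst,
    joinPair_apply (isMatching_joinPair h s t) huv, joinPair_apply h huv, joinPair_apply h hst]
  have := h.invol; have := h.ne
  grind (splits := 40)

variable [Finite α]

/-- If `a` joins `u` and `v` but `b` does not, then joining them in `b` splits off a loop. -/
theorem orbitCount_mul_joinPair {a b : Perm α} (ha : IsMatching a) (hb : IsMatching b) {u v : α}
    (hau : a u = v) (hbu : b u ≠ v) :
    orbitCount (a * joinPair b u v) = orbitCount (a * b) + 2 := by
  have huv : u ≠ v := fun h => ha.ne u (hau.trans h.symm)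
  have hav : a v = u := by rw [← hau, ha.invol]
  have ha1 := ha.invol; have ha2 := ha.ne; have hb1 := hb.invol; have hb2 := hb.ne
  set f := a * b with hf
  have hfx : ∀ x, f x = a (b x) := fun x => rfl
  have hu : f u ≠ u := by grind
  set g := swap u (f u) * f with hg
  have hgx : ∀ x, g x = if f x = u then f u else if f x = f u then u else f x := fun x => by
    simp only [hg, Perm.mul_apply, swap_apply_def]
  have hv : g v ≠ v := by grind
  have key : a * joinPair b u v = swap v (g v) * g := by
    ext x
    simp only [Perm.mul_apply, joinPair_apply hb huv, swap_apply_def]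
    grind (splits := 20)
  rw [key, orbitCount_swap_mul g hv, orbitCount_swap_mul f hu]

end FixedPointFreeInvolutions

section Noncrossing

open Equiv

/-- Joining two adjacent points keeps a matching noncrossing. -/
theorem noncrossing_joinPair {α : Type*} [LinearOrder α] {σ : Perm α} (h : IsMatching σ)
    (hσ : ¬∃ i j : α, i < j ∧ j < σ i ∧ σ i < σ j) {u v : α} (huv : u ⋖ v) :
    ¬∃ i j : α, i < j ∧ j < joinPair σ u v i ∧ joinPair σ u v i < joinPair σ u v j := by
  push Not at hσ
  rintro ⟨x, y, h1, h2, h3⟩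
  have hlt := huv.lt
  have hu : ∀ z, z ≤ u ∨ v ≤ z := fun z =>
    or_iff_not_imp_left.2 fun hz => huv.ge_of_gt (not_le.1 hz)
  have hi := h.invol
  have hne := h.ne
  have hinj := σ.injective
  rw [joinPair_apply h hlt.ne] at h2 h3
  rw [joinPair_apply h hlt.ne] at h3
  by_cases hxu : x = u
  · grind
  by_cases hxv : x = v
  · grind
  by_cases hyu : y = u
  · grind
  by_cases hyv : y = v
  · grind
  simp only [hxu, hxv, hyu, hyv, if_false] at h2 h3
  have hxu' := hu x
  have hyu' := hu y
  by_cases hxp : x = σ u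
  · subst hxp
    grind
  by_cases hxq : x = σ v
  · subst hxq
    have hy : y ≠ σ u := h2.ne.trans_eq (by simp [hxp])
    simp only [hxp, hy, h1.ne', if_false, if_true] at h2 h3
    have := hu (σ u)
    have := hσ v y
    have := hσ y u
    grind
  by_cases hyp : y = σ u
  · subst hyp
    simp only [hxp, hxq, if_false, if_true] at h2 h3
    have := hσ u x
    have := hσ x (σ u)
    have := hσ x v
    have := hu (σ x)
    clear hσ hu
    grind
  by_cases hyq : y = σ v
  · subst hyq
    simp only [hxp, hxq, hyp, if_false, if_true] at h2 h3
    have := hσ v x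
    have := hσ x (σ v)
    have := hσ x u
    have := hu (σ x)
    clear hσ hu
    grind
  grind

end Noncrossing

section CupCap

open Equiv

variable {n : ℕ}

theorem NoncrossingMatching.isMatching (b : NoncrossingMatching n) : IsMatching b.1 :=
  ⟨b.2.1, b.2.2.1⟩

/-- The matching `b` joins the adjacent points `i` and `i + 1`. -/
def HasArc (b : NoncrossingMatching n) (i : ℕ) : Prop :=
  ∃ h : i + 1 < 2 * n, b.1 ⟨i, by omega⟩ = ⟨i + 1, h⟩

/-- Stack a cap and a cup at the points `i` and `i + 1` on top of the matching `b`. -/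
def cupCap (i : ℕ) (b : NoncrossingMatching n) : NoncrossingMatching n :=
  if h : i + 1 < 2 * n then
    ⟨joinPair b.1 ⟨i, by omega⟩ ⟨i + 1, h⟩, (isMatching_joinPair b.isMatching _ _).invol,
      (isMatching_joinPair b.isMatching _ _).ne,
      noncrossing_joinPair b.isMatching b.2.2.2
        ⟨Fin.mk_lt_mk.2 i.lt_succ_self, fun c h1 h2 => by
          simp only [Fin.lt_def] at h1 h2; omega⟩⟩
  else b

theorem cupCap_val {i : ℕ} (h : i + 1 < 2 * n) (b : NoncrossingMatching n) :
    (cupCap i b).1 = joinPair b.1 ⟨i, by omega⟩ ⟨i + 1, h⟩ := by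
  rw [cupCap, dif_pos h]

theorem hasArc_cupCap {i : ℕ} (h : i + 1 < 2 * n) (b : NoncrossingMatching n) :
    HasArc (cupCap i b) i :=
  ⟨h, by rw [cupCap_val h, joinPair_apply_left b.isMatching (by simp)]⟩

theorem cupCap_eq_self {b : NoncrossingMatching n} {i : ℕ} (hb : HasArc b i) :
    cupCap i b = b := by
  obtain ⟨h, hb⟩ := hb
  exact Subtype.ext (by rw [cupCap_val h, joinPair_eq_self hb])

theorem HasArc.apply_succ {b : NoncrossingMatching n} {i : ℕ} (hb : HasArc b i)
    (h : i + 1 < 2 * n) : b.1 ⟨i + 1, h⟩ = ⟨i, by omega⟩ := by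
  obtain ⟨_, hb⟩ := hb
  rw [← hb, b.isMatching.invol]

theorem HasArc.not_succ {b : NoncrossingMatching n} {i : ℕ} (hb : HasArc b i) :
    ¬HasArc b (i + 1) := by
  rintro ⟨h, hb'⟩
  rw [hb.apply_succ (by omega), Fin.mk.injEq] at hb'
  omega

theorem cupCap_cupCap_succ {b : NoncrossingMatching n} {i : ℕ} (hb : HasArc b i)
    (h : i + 1 + 1 < 2 * n) : cupCap i (cupCap (i + 1) b) = b := by
  refine Subtype.ext ?_
  rw [cupCap_val (by omega), cupCap_val h]
  exact joinPair_joinPair_of_apply_eq b.isMatching hb.2 (by simp) (by simp; omega)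

theorem cupCap_succ_cupCap {b : NoncrossingMatching n} {i : ℕ} (hb : HasArc b (i + 1)) :
    cupCap (i + 1) (cupCap i b) = b := by
  have h := hb.1
  refine Subtype.ext ?_
  have h' := isMatching_joinPair b.isMatching ⟨i, by omega⟩ ⟨i + 1, by omega⟩
  rw [cupCap_val h, cupCap_val (by omega), joinPair_comm h' (by simp),
    joinPair_comm b.isMatching (by simp)]
  exact joinPair_joinPair_of_apply_eq b.isMatching (hb.apply_succ h) (by simp) (by simp; omega)

theorem cupCap_comm {i j : ℕ} (hij : i + 2 ≤ j) (hj : j + 1 < 2 * n)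
    (b : NoncrossingMatching n) : cupCap i (cupCap j b) = cupCap j (cupCap i b) := by
  refine Subtype.ext ?_
  rw [cupCap_val (by omega), cupCap_val hj, cupCap_val hj, cupCap_val (by omega)]
  apply joinPair_joinPair_comm b.isMatching <;> simp only [ne_eq, Fin.mk.injEq] <;> omega

open Classical in
/-- The factor produced by the loop that stacking a cap on the arc at `i`, if any, closes up. -/
noncomputable def arcWeight (d : ℂ) (i : ℕ) (b : NoncrossingMatching n) : ℂ :=
  if HasArc b i then d else 1

theorem arcWeight_of_hasArc {d : ℂ} {i : ℕ} {b : NoncrossingMatching n} (h : HasArc b i) :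
    arcWeight d i b = d := if_pos h

theorem arcWeight_of_not_hasArc {d : ℂ} {i : ℕ} {b : NoncrossingMatching n} (h : ¬HasArc b i) :
    arcWeight d i b = 1 := if_neg h

theorem arcWeight_mul_arcWeight_cupCap {d : ℂ} {i j : ℕ} (hij : i + 2 ≤ j) (hj : j + 1 < 2 * n)
    (b : NoncrossingMatching n) :
    arcWeight d j b * arcWeight d i (cupCap j b) =
      arcWeight d i b * arcWeight d j (cupCap i b) := by
  have hi : i + 1 < 2 * n := by omega
  have h1 : ∀ c : NoncrossingMatching n, HasArc c i ↔ c.1 ⟨i, by omega⟩ = ⟨i + 1, hi⟩ :=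
    fun c => ⟨fun h => h.2, fun h => ⟨hi, h⟩⟩
  have h2 : ∀ c : NoncrossingMatching n, HasArc c j ↔ c.1 ⟨j, by omega⟩ = ⟨j + 1, hj⟩ :=
    fun c => ⟨fun h => h.2, fun h => ⟨hj, h⟩⟩
  simp only [arcWeight, h1, h2, cupCap_val hi, cupCap_val hj]
  have huv : (⟨i, by omega⟩ : Fin (2 * n)) ≠ ⟨i + 1, hi⟩ := by simp
  have hst : (⟨j, by omega⟩ : Fin (2 * n)) ≠ ⟨j + 1, hj⟩ := by simp
  have hus : (⟨i, by omega⟩ : Fin (2 * n)) ≠ ⟨j, by omega⟩ := by simp; omega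
  have hut : (⟨i, by omega⟩ : Fin (2 * n)) ≠ ⟨j + 1, by omega⟩ := by simp; omega
  have hvs : (⟨i + 1, by omega⟩ : Fin (2 * n)) ≠ ⟨j, by omega⟩ := by simp; omega
  have hvt : (⟨i + 1, by omega⟩ : Fin (2 * n)) ≠ ⟨j + 1, by omega⟩ := by simp; omega
  rw [joinPair_apply b.isMatching huv, joinPair_apply b.isMatching hst]
  generalize (⟨i, _⟩ : Fin (2 * n)) = u at *
  generalize (⟨i + 1, _⟩ : Fin (2 * n)) = v at *
  generalize (⟨j, _⟩ : Fin (2 * n)) = s at *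
  generalize (⟨j + 1, _⟩ : Fin (2 * n)) = t at *
  have := b.isMatching.invol; have := b.isMatching.ne
  clear h1 h2
  grind (splits := 20)

end CupCap

section Kappa

variable {n : ℕ}

theorem kappa_eq (a b : NoncrossingMatching n) : kappa a b = orbitCount (a.1 * b.1) / 2 := rfl

theorem kappa_comm (a b : NoncrossingMatching n) : kappa a b = kappa b a := by
  have inv_eq : ∀ c : NoncrossingMatching n, c.1⁻¹ = c.1 := fun c =>
    inv_eq_of_mul_eq_one_left (Equiv.ext c.isMatching.invol)
  rw [kappa_eq, kappa_eq, ← orbitCount_inv, mul_inv_rev, inv_eq, inv_eq]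

theorem one_le_kappa (hn : 1 ≤ n) (a b : NoncrossingMatching n) : 1 ≤ kappa a b := by
  have : Nonempty (Fin (2 * n)) := ⟨⟨0, by omega⟩⟩
  have := two_le_orbitCount a.isMatching b.isMatching
  rw [kappa_eq]
  omega

theorem kappa_cupCap {a b : NoncrossingMatching n} {i : ℕ} (ha : HasArc a i) (hb : ¬HasArc b i) :
    kappa a (cupCap i b) = kappa a b + 1 := by
  obtain ⟨h, ha⟩ := ha
  rw [kappa_eq, kappa_eq, cupCap_val h, orbitCount_mul_joinPair a.isMatching b.isMatching ha
    fun hb' => hb ⟨h, hb'⟩]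
  omega

/-- Stacking a cap and a cup is self-adjoint for the meander pairing. -/
theorem arcWeight_mul_pow_kappa {d : ℂ} {i : ℕ} (h : i + 1 < 2 * n)
    (a b : NoncrossingMatching n) :
    arcWeight d i a * d ^ kappa (cupCap i a) b = arcWeight d i b * d ^ kappa a (cupCap i b) := by
  by_cases ha : HasArc a i <;> by_cases hb : HasArc b i
  · rw [cupCap_eq_self ha, cupCap_eq_self hb, arcWeight_of_hasArc ha, arcWeight_of_hasArc hb]
  · rw [cupCap_eq_self ha, kappa_cupCap ha hb, arcWeight_of_hasArc ha,
      arcWeight_of_not_hasArc hb, pow_succ', one_mul]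
  · rw [cupCap_eq_self hb, kappa_comm, kappa_cupCap hb ha, arcWeight_of_not_hasArc ha,
      arcWeight_of_hasArc hb, kappa_comm b, pow_succ', one_mul]
  · have h1 := kappa_cupCap (hasArc_cupCap h a) hb
    have h2 := kappa_cupCap (hasArc_cupCap h b) ha
    rw [kappa_comm, h1, kappa_comm _ a] at h2
    rw [arcWeight_of_not_hasArc ha, arcWeight_of_not_hasArc hb, Nat.succ_injective h2]

end Kappa

section GramForm

variable {n : ℕ}

/-- The action of the `i`-th Temperley–Lieb generator on the span of crossingless matchings. -/
noncomputable def tlGen (n : ℕ) (d : ℂ) (i : ℕ) : Module.End ℂ (NoncrossingMatching n →₀ ℂ) :=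
  Finsupp.linearCombination ℂ fun b => Finsupp.single (cupCap i b) (arcWeight d i b)

theorem tlGen_single (d : ℂ) (i : ℕ) (b : NoncrossingMatching n) (c : ℂ) :
    tlGen n d i (Finsupp.single b c) = Finsupp.single (cupCap i b) (c * arcWeight d i b) := by
  simp [tlGen]

theorem tlGen_single_of_hasArc (d : ℂ) {i : ℕ} {b : NoncrossingMatching n} (h : HasArc b i)
    (c : ℂ) : tlGen n d i (Finsupp.single b c) = d • Finsupp.single b c := by
  rw [tlGen_single, cupCap_eq_self h, arcWeight_of_hasArc h, Finsupp.smul_single, smul_eq_mul,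
    mul_comm]

theorem isTemperleyLieb_tlGen (n : ℕ) (d : ℂ) : IsTemperleyLieb d (2 * n - 1) (tlGen n d) where
  mul_self i hi := Finsupp.lhom_ext fun b c => by
    rw [Module.End.mul_apply, LinearMap.smul_apply, tlGen_single,
      tlGen_single_of_hasArc d (hasArc_cupCap (by omega) b)]
  braid_up i hi := Finsupp.lhom_ext fun b c => by
    have h := hasArc_cupCap (i := i) (by omega) b
    simp only [Module.End.mul_apply, tlGen_single]
    rw [cupCap_cupCap_succ h (by omega), arcWeight_of_not_hasArc h.not_succ,
      arcWeight_of_not_hasArc fun h' => h'.not_succ (hasArc_cupCap (by omega) _), mul_one, mul_one]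
  braid_down i hi := Finsupp.lhom_ext fun b c => by
    have h := hasArc_cupCap (i := i + 1) (by omega) b
    simp only [Module.End.mul_apply, tlGen_single]
    rw [cupCap_succ_cupCap h, arcWeight_of_not_hasArc fun h' => h'.not_succ h,
      arcWeight_of_not_hasArc (hasArc_cupCap (i := i) (by omega) _).not_succ, mul_one, mul_one]
  comm i j hij hj := Finsupp.lhom_ext fun b c => by
    simp only [Module.End.mul_apply, tlGen_single]
    rw [cupCap_comm hij (by omega), mul_assoc, mul_assoc,
      arcWeight_mul_arcWeight_cupCap hij (by omega)]

/-- The bilinear extension of the meander pairing. -/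
noncomputable def gramForm (n : ℕ) (d : ℂ) :
    (NoncrossingMatching n →₀ ℂ) →ₗ[ℂ] (NoncrossingMatching n →₀ ℂ) →ₗ[ℂ] ℂ :=
  Finsupp.linearCombination ℂ fun a => Finsupp.linearCombination ℂ fun b => d ^ kappa a b

theorem gramForm_single_single (d : ℂ) (a b : NoncrossingMatching n) (x y : ℂ) :
    gramForm n d (Finsupp.single a x) (Finsupp.single b y) = x * (y * d ^ kappa a b) := by
  simp [gramForm]

theorem gramForm_tlGen (d : ℂ) {i : ℕ} (hi : i + 1 < 2 * n) (x y : NoncrossingMatching n →₀ ℂ) :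
    gramForm n d (tlGen n d i x) y = gramForm n d x (tlGen n d i y) := by
  have : gramForm n d ∘ₗ tlGen n d i = (gramForm n d).compl₂ (tlGen n d i) :=
    Finsupp.lhom_ext fun a x => Finsupp.lhom_ext fun b y => by
      simp only [LinearMap.comp_apply, LinearMap.compl₂_apply, tlGen_single,
        gramForm_single_single]
      linear_combination x * y * arcWeight_mul_pow_kappa (d := d) hi a b
  exact LinearMap.congr_fun₂ this x y

/-- The points from `2m` on are joined in consecutive pairs by `b`. -/
def TailPaired (m : ℕ) (b : NoncrossingMatching n) : Prop :=
  ∀ j, m ≤ j → j < n → HasArc b (2 * j)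

/-- The span of the matchings joining the points from `2m` on in consecutive pairs. -/
noncomputable def tailSpan (n m : ℕ) : Submodule ℂ (NoncrossingMatching n →₀ ℂ) :=
  Finsupp.supported ℂ ℂ {b | TailPaired m b}

theorem tailSpan_mono {m m' : ℕ} (h : m ≤ m') : tailSpan n m ≤ tailSpan n m' :=
  Finsupp.supported_mono fun _ hb j hj hjn => hb j (h.trans hj) hjn

theorem tailSpan_self : tailSpan n n = ⊤ := by
  refine (congrArg _ (Set.eq_univ_of_forall fun b j h h' => ?_)).trans Finsupp.supported_univ
  omega

theorem single_mem_tailSpan {m : ℕ} {b : NoncrossingMatching n} (h : TailPaired m b) (c : ℂ) :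
    Finsupp.single b c ∈ tailSpan n m :=
  Finsupp.single_mem_supported ℂ c h

/-- A property of vectors of `tailSpan n m` stable under linear combinations can be checked on
matchings. -/
theorem tailSpan_le_iff {m : ℕ} (p : Submodule ℂ (NoncrossingMatching n →₀ ℂ)) :
    tailSpan n m ≤ p ↔ ∀ b, TailPaired m b → Finsupp.single b 1 ∈ p := by
  rw [tailSpan, Finsupp.supported_eq_span_single, Submodule.span_le, Set.image_subset_iff]
  rfl

theorem TailPaired.cupCap {m i : ℕ} {b : NoncrossingMatching n} (hb : TailPaired m b)
    (hi : i + 1 < 2 * m) : TailPaired m (cupCap i b) := by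
  intro j hj hjn
  obtain ⟨h, hj'⟩ := hb j hj hjn
  refine ⟨h, ?_⟩
  have hi' : i + 1 < 2 * n := by omega
  have h1 := b.isMatching.invol ⟨i, by omega⟩
  have h2 := b.isMatching.invol ⟨i + 1, by omega⟩
  rw [cupCap_val hi', joinPair_apply b.isMatching (by simp), if_neg (by simp; omega),
    if_neg (by simp; omega), if_neg, if_neg, hj']
  · intro h'
    rw [← h', hj', Fin.mk.injEq] at h2
    omega
  · intro h'
    rw [← h', hj', Fin.mk.injEq] at h1
    omega

theorem TailPaired.of_hasArc {m : ℕ} {b : NoncrossingMatching n} (hb : TailPaired (m + 1) b)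
    (h : HasArc b (2 * m)) : TailPaired m b := by
  intro j hj hjn
  rcases hj.eq_or_lt with rfl | hj
  · exact h
  · exact hb j hj hjn

theorem tlGen_mem_tailSpan {d : ℂ} {m i : ℕ} (hi : i + 1 < 2 * m)
    {x : NoncrossingMatching n →₀ ℂ} (hx : x ∈ tailSpan n m) : tlGen n d i x ∈ tailSpan n m := by
  refine (tailSpan_le_iff ((tailSpan n m).comap (tlGen n d i))).2 (fun b hb => ?_) hx
  rw [Submodule.mem_comap, tlGen_single]
  exact single_mem_tailSpan (hb.cupCap hi) _

theorem tlGen_mem_tailSpan_pred {d : ℂ} {m : ℕ} (hm : m < n)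
    {x : NoncrossingMatching n →₀ ℂ} (hx : x ∈ tailSpan n (m + 1)) :
    tlGen n d (2 * m) x ∈ tailSpan n m := by
  refine (tailSpan_le_iff ((tailSpan n m).comap (tlGen n d (2 * m)))).2 (fun b hb => ?_) hx
  rw [Submodule.mem_comap, tlGen_single]
  exact single_mem_tailSpan
    ((hb.cupCap (by omega)).of_hasArc (hasArc_cupCap (by omega) b)) _

theorem tlGen_of_mem_tailSpan {d : ℂ} {m : ℕ} (hm : m < n)
    {x : NoncrossingMatching n →₀ ℂ} (hx : x ∈ tailSpan n m) :
    tlGen n d (2 * m) x = d • x := by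
  refine (tailSpan_le_iff (LinearMap.eqLocus (tlGen n d (2 * m)) (d • LinearMap.id))).2
    (fun b hb => ?_) hx
  rw [LinearMap.mem_eqLocus, tlGen_single_of_hasArc d (hb m le_rfl hm)]
  rfl

/-- The meander pairing is nondegenerate on `tailSpan n m`. -/
def TailNondegenerate (n : ℕ) (d : ℂ) (m : ℕ) : Prop :=
  ∀ x ∈ tailSpan n m, (∀ y ∈ tailSpan n m, gramForm n d x y = 0) → x = 0

theorem TailNondegenerate.pred {d : ℂ} (hd : d ≠ 0) {m : ℕ} (hm : m < n)
    (h : TailNondegenerate n d (m + 1)) : TailNondegenerate n d m := by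
  intro x hx hxy
  refine h x (tailSpan_mono m.le_succ hx) fun y hy => ?_
  have := hxy _ (tlGen_mem_tailSpan_pred (d := d) hm hy)
  rw [← gramForm_tlGen d (by omega), tlGen_of_mem_tailSpan hm hx, map_smul, LinearMap.smul_apply,
    smul_eq_mul] at this
  exact (mul_eq_zero.1 this).resolve_left hd

theorem tlGen_eq_zero_of_gramForm_eq_zero {d : ℂ} {m : ℕ} (hm : m < n)
    (h : TailNondegenerate n d m) (i : ℕ) (hi : i ≤ 2 * m) (x : NoncrossingMatching n →₀ ℂ)
    (hx : x ∈ tailSpan n (m + 1)) (hxy : ∀ y ∈ tailSpan n (m + 1), gramForm n d x y = 0) :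
    tlGen n d i x = 0 := by
  have hrad : ∀ i ≤ 2 * m, ∀ x, (∀ y ∈ tailSpan n (m + 1), gramForm n d x y = 0) →
      ∀ y ∈ tailSpan n (m + 1), gramForm n d (tlGen n d i x) y = 0 := by
    intro i hi x hxy y hy
    rw [gramForm_tlGen d (by omega)]
    exact hxy _ (tlGen_mem_tailSpan (by omega) hy)
  induction hi using Nat.decreasingInduction generalizing x with
  | self =>
    exact h _ (tlGen_mem_tailSpan_pred hm hx) fun y hy =>
      hrad _ le_rfl x hxy y (tailSpan_mono m.le_succ hy)
  | of_succ i hi ih =>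
    rw [← (isTemperleyLieb_tlGen n d).braid_up i (by omega), Module.End.mul_apply,
      Module.End.mul_apply,
      ih (tlGen n d i x) (tlGen_mem_tailSpan (by omega) hx) (hrad i hi.le x hxy), map_zero]

end GramForm

section Rainbow

open Equiv

variable {n : ℕ}

/-- The matching joining `j` to `2m - 1 - j` for `j < 2m` and the points from `2m` on in
consecutive pairs. -/
def rainbow (m : ℕ) (hm : m ≤ n) : NoncrossingMatching n :=
  have hlt : ∀ j : Fin (2 * n),
      (if j.1 < 2 * m then 2 * m - 1 - j else if j.1 % 2 = 0 then j + 1 else j.1 - 1) < 2 * n :=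
    fun j => by have := j.2; split_ifs <;> omega
  have hinv : Function.Involutive fun j : Fin (2 * n) => (⟨_, hlt j⟩ : Fin (2 * n)) := fun j => by
    ext
    simp only
    split_ifs <;> omega
  ⟨hinv.toPerm _, hinv, fun j h => by
    have := congrArg Fin.val h
    simp only [Function.Involutive.coe_toPerm] at this
    split_ifs at this <;> omega, by
    rintro ⟨i, j, h1, h2, h3⟩
    simp only [Function.Involutive.coe_toPerm, Fin.lt_def] at h1 h2 h3
    split_ifs at h2 h3 <;> omega⟩

theorem rainbow_apply {m : ℕ} (hm : m ≤ n) (j : Fin (2 * n)) :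
    ((rainbow m hm).1 j : ℕ) =
      if j.1 < 2 * m then 2 * m - 1 - j else if j.1 % 2 = 0 then j + 1 else j.1 - 1 :=
  rfl

theorem tailPaired_rainbow {m : ℕ} (hm : m ≤ n) : TailPaired m (rainbow m hm) := fun j hj hjn =>
  ⟨by omega, Fin.ext (by rw [rainbow_apply, if_neg (by simp; omega), if_pos (by simp)])⟩

theorem hasArc_rainbow_iff {m : ℕ} (hm : m ≤ n) {i : ℕ} (hi : i + 1 < 2 * m) :
    HasArc (rainbow m hm) i ↔ i + 1 = m := by
  rw [HasArc, exists_prop_of_true (by omega), Fin.ext_iff, rainbow_apply,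
    if_pos (by simp; omega)]
  simp only
  omega

theorem cupCap_rainbow {m : ℕ} (hm : m ≤ n) {i : ℕ} (hi : i + 1 < 2 * m) :
    cupCap (2 * m - 2 - i) (rainbow m hm) = cupCap i (rainbow m hm) := by
  refine Subtype.ext ?_
  rw [cupCap_val (by omega), cupCap_val (by omega)]
  have h := (rainbow m hm).isMatching
  rw [← joinPair_partners h (by simp)]
  congr 1 <;> ext <;> rw [rainbow_apply, if_pos (by simp; omega)] <;> simp <;> omega

theorem exists_hasArc (b : NoncrossingMatching n) (j : Fin (2 * n)) (hj : j < b.1 j) :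
    ∃ i, j.1 ≤ i ∧ i < (b.1 j).1 ∧ HasArc b i := by
  obtain ⟨L, hL⟩ : ∃ L, (b.1 j).1 - j ≤ L := ⟨_, le_rfl⟩
  induction L generalizing j with
  | zero => rw [Fin.lt_def] at hj; omega
  | succ L ih =>
    have hlt := (b.1 j).2
    rw [Fin.lt_def] at hj
    by_cases h : (b.1 j).1 = j + 1
    · exact ⟨j, le_rfl, hj, by omega, Fin.ext h⟩
    · set k : Fin (2 * n) := ⟨j + 1, by omega⟩
      have hkv : k.1 = j + 1 := rfl
      have hkk := b.1.injective.ne (a₁ := j) (a₂ := k) (by simp [Fin.ext_iff, k])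
      have hne := b.isMatching.ne k
      have hinv := b.isMatching.invol
      have h1 : ¬((b.1 j).1 < b.1 k) := fun h' =>
        b.2.2.2 ⟨j, k, by simp [Fin.lt_def, k], by rw [Fin.lt_def]; omega, h'⟩
      have h2 : ¬((b.1 k).1 < j) := fun h' =>
        b.2.2.2 ⟨b.1 k, j, h', by rw [hinv, Fin.lt_def]; omega, by
          rw [hinv, Fin.lt_def]; omega⟩
      have h3 : (b.1 k).1 ≠ j := fun h' => h (by
        have := congrArg b.1 (Fin.ext h')
        rw [hinv] at this
        rw [← this])
      rw [Ne, Fin.ext_iff] at hkk hne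
      obtain ⟨i, hi1, hi2, hi⟩ := ih k (by rw [Fin.lt_def]; omega) (by omega)
      exact ⟨i, by omega, by omega, hi⟩

/-- The rainbow is the only matching with a paired tail having no arc in its left half. -/
theorem eq_rainbow {m : ℕ} (hm : m ≤ n) {b : NoncrossingMatching n} (hb : TailPaired m b)
    (h : ∀ i, i + 1 < m → ¬HasArc b i) : b = rainbow m hm := by
  have hinv := b.isMatching.invol
  have hlt : ∀ j : Fin (2 * n), j.1 < 2 * m → (b.1 j).1 < 2 * m := by
    intro j hj
    by_contra hc
    have h1 := hb ((b.1 j).1 / 2) (by omega) (by omega)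
    have h2 := hinv j
    rcases Nat.mod_two_eq_zero_or_one (b.1 j).1 with h0 | h0
    · obtain ⟨_, h1⟩ := h1
      rw [show (⟨2 * ((b.1 j).1 / 2), by omega⟩ : Fin (2 * n)) = b.1 j from
        Fin.ext (by simp only; omega), h2, Fin.ext_iff] at h1
      simp only at h1
      omega
    · have h1 := h1.apply_succ (by omega)
      rw [show (⟨2 * ((b.1 j).1 / 2) + 1, by omega⟩ : Fin (2 * n)) = b.1 j from
        Fin.ext (by simp only; omega), h2, Fin.ext_iff] at h1
      simp only at h1
      omega
  have hge : ∀ j : Fin (2 * n), j.1 < m → m ≤ (b.1 j).1 := by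
    intro j hj
    by_contra! hc
    rcases lt_or_gt_of_ne (b.isMatching.ne j) with h' | h'
    · obtain ⟨i, -, hi, hi'⟩ := exists_hasArc b (b.1 j) (by rwa [hinv])
      rw [hinv] at hi
      exact h i (by omega) hi'
    · obtain ⟨i, -, hi, hi'⟩ := exists_hasArc b j h'
      exact h i (by omega) hi'
  have hanti : ∀ i j : Fin (2 * n), i < j → j.1 < m → b.1 j < b.1 i := by
    intro i j hij hj
    by_contra hc
    have hne := b.1.injective.ne hij.ne
    have h1 := hge i (by rw [Fin.lt_def] at hij; omega)
    exact b.2.2.2 ⟨i, j, hij, by rw [Fin.lt_def]; omega, lt_of_le_of_ne (not_lt.1 hc) hne⟩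
  have hup : ∀ j (hj : j < m), (b.1 ⟨j, by omega⟩).1 + j < 2 * m := by
    intro j
    induction j with
    | zero => exact fun hj => hlt _ (by simp; omega)
    | succ j ih =>
      intro hj
      have h1 := ih (by omega)
      have h2 := hanti ⟨j, by omega⟩ ⟨j + 1, by omega⟩ (by simp) hj
      rw [Fin.lt_def] at h2
      omega
  have hlow : ∀ t j (hj : j < m), j + t + 1 = m → m + t ≤ (b.1 ⟨j, by omega⟩).1 := by
    intro t
    induction t with
    | zero => exact fun j hj _ => hge _ hj
    | succ t ih =>
      intro j hj hjt
      have h1 := ih (j + 1) (by omega) (by omega)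
      have h2 := hanti ⟨j, by omega⟩ ⟨j + 1, by omega⟩ (by simp) (by simp; omega)
      rw [Fin.lt_def] at h2
      omega
  have heq : ∀ j : Fin (2 * n), j.1 < m → (b.1 j).1 = 2 * m - 1 - j := by
    intro j hj
    have h1 := hup j hj
    have h2 := hlow (m - 1 - j) j hj (by omega)
    simp only [Fin.eta] at h1 h2
    omega
  refine Subtype.ext (Equiv.ext fun j => Fin.ext ?_)
  rw [rainbow_apply]
  have hj := j.2
  split_ifs with h1 h2
  · by_cases hjm : j.1 < m
    · exact heq j hjm
    · have h3 := heq ⟨2 * m - 1 - j, by omega⟩ (by simp only; omega)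
      have h4 : b.1 ⟨2 * m - 1 - j, by omega⟩ = j := Fin.ext (by simp only at h3; omega)
      have h5 := congrArg b.1 h4
      rw [hinv] at h5
      rw [← h5]
  · obtain ⟨_, h3⟩ := hb (j.1 / 2) (by omega) (by omega)
    rw [show (⟨2 * (j.1 / 2), by omega⟩ : Fin (2 * n)) = j from
        Fin.ext (by simp only; omega)] at h3
    rw [h3]
    simp only
    omega
  · have h3 := (hb (j.1 / 2) (by omega) (by omega)).apply_succ (by omega)
    rw [show (⟨2 * (j.1 / 2) + 1, by omega⟩ : Fin (2 * n)) = j from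
        Fin.ext (by simp only; omega)] at h3
    rw [h3]
    simp only
    omega

end Rainbow

section Nondegenerate

variable {n : ℕ} {d : ℂ}

theorem tlGen_apply_eq_zero {i : ℕ} (hi : i + 1 < 2 * n) {r : NoncrossingMatching n}
    (hr : ¬HasArc r i) (x : NoncrossingMatching n →₀ ℂ) : tlGen n d i x r = 0 := by
  have : Finsupp.lapply r ∘ₗ tlGen n d i = 0 := Finsupp.lhom_ext fun b c => by
    rw [LinearMap.comp_apply, tlGen_single, Finsupp.lapply_apply, Finsupp.single_eq_of_ne]
    · rfl
    · rintro rfl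
      exact hr (hasArc_cupCap hi b)
  exact LinearMap.congr_fun this x

theorem jonesWenzl_tlGen_apply {r : NoncrossingMatching n} {k : ℕ} (hk : k < 2 * n)
    (hr : ∀ i < k, ¬HasArc r i) (x : NoncrossingMatching n →₀ ℂ) :
    jonesWenzl d (tlGen n d) k x r = x r := by
  induction k generalizing x with
  | zero => rfl
  | succ k ih =>
    have ih := ih (by omega) fun i hi => hr i (by omega)
    rw [jonesWenzl, LinearMap.sub_apply, LinearMap.smul_apply, Module.End.mul_apply,
      Module.End.mul_apply, Finsupp.sub_apply, Finsupp.smul_apply, ih, ih,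
      tlGen_apply_eq_zero (by omega) (hr k (by omega)), smul_zero, sub_zero]

theorem jonesWenzl_tlGen_mem_tailSpan {m k : ℕ} (hk : k < 2 * m)
    {x : NoncrossingMatching n →₀ ℂ} (hx : x ∈ tailSpan n m) :
    jonesWenzl d (tlGen n d) k x ∈ tailSpan n m := by
  induction k generalizing x with
  | zero => exact hx
  | succ k ih =>
    have ih := @ih (by omega)
    exact Submodule.sub_mem _ (ih hx)
      (Submodule.smul_mem _ _ (ih (tlGen_mem_tailSpan (by omega) (ih hx))))

theorem tlGen_jonesWenzl_rainbow (hd : d ≠ 0) {m : ℕ} (hm : m + 1 ≤ n)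
    (hq : ∀ i ≤ m, quantumInt d i ≠ 0) :
    tlGen n d m (jonesWenzl d (tlGen n d) m (Finsupp.single (rainbow (m + 1) hm) 1)) =
      (quantumInt d (m + 1) / quantumInt d m) •
        jonesWenzl d (tlGen n d) (m - 1) (Finsupp.single (rainbow (m + 1) hm) 1) := by
  have he := isTemperleyLieb_tlGen n d
  have hidem := jonesWenzl_smul_eq_self (d := d) (e := tlGen n d)
    (jonesWenzl d (tlGen n d) (m - 1)) (m - 1)
    (he.mul_jonesWenzl_eq_zero (m - 1) (by omega) fun i hi => hq i (by omega)).1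
  have h := LinearMap.congr_fun (he.mul_jonesWenzl_mul m (by omega) (hq m le_rfl) hidem)
    (Finsupp.single (rainbow (m + 1) hm) 1)
  rw [LinearMap.smul_apply, Module.End.mul_apply, Module.End.mul_apply, Module.End.mul_apply,
    tlGen_single_of_hasArc d ((hasArc_rainbow_iff hm (by omega)).2 rfl), map_smul, map_smul,
    map_smul, smul_comm] at h
  exact smul_right_injective _ hd h

theorem TailNondegenerate.succ (hd : d ≠ 0) {m : ℕ} (hm : m + 1 ≤ n)
    (hq : ∀ i ≤ m + 1, quantumInt d i ≠ 0) (h : TailNondegenerate n d m) :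
    TailNondegenerate n d (m + 1) := by
  intro x hx hxy
  have hzero : ∀ i ≤ 2 * m, tlGen n d i x = 0 := fun i hi =>
    tlGen_eq_zero_of_gramForm_eq_zero hm h i hi x hx hxy
  set r := rainbow (m + 1) hm
  have hrarc : ∀ i < m, ¬HasArc r i := fun i hi h => by
    have := (hasArc_rainbow_iff hm (by omega)).1 h
    omega
  set q := jonesWenzl d (tlGen n d) m
  have hqx : q x = x :=
    jonesWenzl_smul_eq_self (d := d) (e := tlGen n d) x m fun i hi => hzero i (by omega)
  have hqy : ∀ y ∈ tailSpan n (m + 1), q y = y r • q (Finsupp.single r 1) := by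
    intro y hy
    refine (tailSpan_le_iff (LinearMap.eqLocus q
      ((Finsupp.lapply r).smulRight (q (Finsupp.single r 1))))).2 (fun b hb => ?_) hy
    rw [LinearMap.mem_eqLocus, LinearMap.smulRight_apply, Finsupp.lapply_apply]
    by_cases hbr : b = r
    · rw [hbr, Finsupp.single_eq_same, one_smul]
    · rw [Finsupp.single_eq_of_ne (Ne.symm hbr), zero_smul]
      obtain ⟨i, hi, hbi⟩ : ∃ i, i + 1 < m + 1 ∧ HasArc b i := by
        by_contra! hc
        exact hbr (eq_rainbow hm hb hc)
      have := LinearMap.congr_fun (((isTemperleyLieb_tlGen n d).mul_jonesWenzl_eq_zero m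
        (by omega) fun i hi => hq i (by omega)).2 i (by omega)) (Finsupp.single b 1)
      rw [Module.End.mul_apply, tlGen_single_of_hasArc d hbi, map_smul] at this
      exact (smul_eq_zero.1 this).resolve_left hd
  have hxr := hqy x hx
  rw [hqx] at hxr
  have h0 := DFunLike.congr_fun (hzero m (by omega)) r
  rw [hxr, map_smul, tlGen_jonesWenzl_rainbow hd hm fun i hi => hq i (by omega),
    Finsupp.smul_apply, Finsupp.smul_apply,
    jonesWenzl_tlGen_apply (by omega) fun i hi => hrarc i (by omega), Finsupp.single_eq_same,
    Finsupp.zero_apply, smul_eq_mul, smul_eq_mul, mul_one] at h0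
  have hxr0 := (mul_eq_zero.1 h0).resolve_right
    (div_ne_zero (hq _ le_rfl) (hq _ (by omega)))
  rw [hxr, hxr0, zero_smul]

theorem not_tailNondegenerate (hd : d ≠ 0) {m : ℕ} (hm : m + 1 ≤ n)
    (hq : ∀ i ≤ m, quantumInt d i ≠ 0) (hq0 : quantumInt d (m + 1) = 0) :
    ¬TailNondegenerate n d (m + 1) := by
  intro h
  have he := isTemperleyLieb_tlGen n d
  set r := rainbow (m + 1) hm with hr
  have hrarc : ∀ i ≤ 2 * m, HasArc r i ↔ i = m := fun i hi => by
    rw [hr, hasArc_rainbow_iff hm (by omega), Nat.add_right_cancel_iff]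
  set q := jonesWenzl d (tlGen n d) m
  have hleft : ∀ i < m, tlGen n d i * q = 0 := (he.mul_jonesWenzl_eq_zero m (by omega) hq).1
  have hzero : ∀ i ≤ 2 * m, tlGen n d i (q (Finsupp.single r 1)) = 0 := by
    intro i hi
    rcases lt_trichotomy i m with him | rfl | him
    · exact LinearMap.congr_fun (hleft i him) _
    · rw [tlGen_jonesWenzl_rainbow hd hm hq, hq0, zero_div, zero_smul]
    · have hswap : tlGen n d i (Finsupp.single r 1) =
          tlGen n d (2 * m - i) (Finsupp.single r 1) := by
        rw [tlGen_single, tlGen_single,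
          arcWeight_of_not_hasArc (by rw [hrarc i hi]; omega),
          arcWeight_of_not_hasArc (by rw [hrarc _ (by omega)]; omega), hr,
          ← cupCap_rainbow hm (by omega)]
        rfl
      have hright := (he.mul_jonesWenzl_eq_zero m (by omega) hq).2 (2 * m - i) (by omega)
      rw [← Module.End.mul_apply, ← he.jonesWenzl_comm m i him (by omega), Module.End.mul_apply,
        hswap, ← Module.End.mul_apply, hright, LinearMap.zero_apply]
  have hmem : q (Finsupp.single r 1) ∈ tailSpan n (m + 1) :=
    jonesWenzl_tlGen_mem_tailSpan (by omega) (single_mem_tailSpan (tailPaired_rainbow hm) 1)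
  have hx := h _ hmem fun y hy => by
    refine (tailSpan_le_iff (LinearMap.ker (gramForm n d (q (Finsupp.single r 1))))).2
      (fun b hb => ?_) hy
    obtain ⟨i, hi, hbi⟩ : ∃ i, i ≤ 2 * m ∧ HasArc b i := by
      by_contra! hc
      have := eq_rainbow hm hb fun i hi => hc i (by omega)
      exact hc m (by omega) (this ▸ (hrarc m (by omega)).2 rfl)
    have := gramForm_tlGen d (by omega) (q (Finsupp.single r 1)) (Finsupp.single b 1) (i := i)
    rw [hzero i hi, tlGen_single_of_hasArc d hbi, map_zero, LinearMap.zero_apply, map_smul] at this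
    exact (smul_eq_zero.1 this.symm).resolve_left hd
  have hxr := DFunLike.congr_fun hx r
  rw [jonesWenzl_tlGen_apply (by omega)
    fun i hi => by rw [hrarc i (by omega)]; omega] at hxr
  simp at hxr

theorem tailNondegenerate_zero (hd : d ≠ 0) : TailNondegenerate n d 0 := by
  intro x hx hxy
  have hr := tailPaired_rainbow (n := n) n.zero_le
  have hxr : x = x (rainbow 0 n.zero_le) • Finsupp.single (rainbow 0 n.zero_le) 1 := by
    refine (tailSpan_le_iff (LinearMap.eqLocus LinearMap.id ((Finsupp.lapply
      (rainbow 0 n.zero_le)).smulRight (Finsupp.single (rainbow 0 n.zero_le) (1 : ℂ))))).2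
      (fun b hb => ?_) hx
    rw [eq_rainbow n.zero_le hb fun i hi => absurd hi (by omega)]
    simp
  have h := hxy _ (single_mem_tailSpan hr 1)
  rw [hxr, map_smul, LinearMap.smul_apply, gramForm_single_single, one_mul, one_mul] at h
  rw [hxr, (smul_eq_zero.1 h).resolve_right (pow_ne_zero _ hd), zero_smul]

theorem tailNondegenerate_iff (hd : d ≠ 0) {m : ℕ} (hm : m ≤ n) :
    TailNondegenerate n d m ↔ ∀ i ≤ m, quantumInt d i ≠ 0 := by
  induction m with
  | zero => simp [quantumInt_zero, tailNondegenerate_zero hd]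
  | succ m ih =>
    refine ⟨fun h => ?_, fun h => ((ih (by omega)).2 fun i hi => h i (by omega)).succ hd hm h⟩
    have hq := (ih (by omega)).1 (h.pred hd hm)
    intro i hi
    rcases hi.eq_or_lt with rfl | hi
    · exact fun h0 => not_tailNondegenerate hd hm hq h0 h
    · exact hq i (by omega)

theorem isUnit_meander_iff : IsUnit (Matrix.of fun a b : NoncrossingMatching n => d ^ kappa a b) ↔
    TailNondegenerate n d n := by
  have hform : ∀ (v : NoncrossingMatching n → ℂ) (b : NoncrossingMatching n),
      Matrix.vecMul v (Matrix.of fun a b : NoncrossingMatching n => d ^ kappa a b) b =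
        gramForm n d (Finsupp.equivFunOnFinite.symm v) (Finsupp.single b 1) := fun v b => by
    rw [gramForm, Finsupp.linearCombination_apply, Finsupp.sum_fintype _ _ (by simp)]
    simp [Matrix.vecMul, dotProduct]
  rw [← Matrix.vecMul_injective_iff_isUnit, ← Matrix.coe_vecMulLinear,
    injective_iff_map_eq_zero, TailNondegenerate]
  simp only [tailSpan_self, Submodule.mem_top, true_imp_iff, Matrix.vecMulLinear_apply]
  constructor
  · intro h x hx
    refine Finsupp.equivFunOnFinite.injective (h (Finsupp.equivFunOnFinite x) (funext fun b => ?_))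
    rw [hform, Equiv.symm_apply_apply, hx, Pi.zero_apply]
  · intro h v hv
    have : gramForm n d (Finsupp.equivFunOnFinite.symm v) = 0 := Finsupp.lhom_ext' fun b =>
      LinearMap.ext_ring ((hform v b).symm.trans (congrFun hv b))
    have := h _ fun y => LinearMap.congr_fun this y
    exact (Equiv.symm_apply_eq _).1 this

end Nondegenerate

/-- The meander (Gram) matrix `𝒢_{2n}(d)` with entries `d^{κ(a,b)}`, indexed by
crossingless matchings of `2n` points, is invertible if and only if `d` is not of
the form `2 cos (kπ/(m+1))` with `1 ≤ k ≤ m ≤ n`. -/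
theorem meander_matrix_invertible_iff (n : ℕ) (hn : 1 ≤ n) (d : ℂ) :
    IsUnit (Matrix.of (fun a b : NoncrossingMatching n => d ^ kappa a b)) ↔
      ∀ m k : ℕ, 1 ≤ k → k ≤ m → m ≤ n →
        d ≠ 2 * Complex.cos ((k : ℂ) * (Real.pi : ℂ) / ((m : ℂ) + 1)) := by
  rw [isUnit_meander_iff]
  rcases eq_or_ne d 0 with rfl | hd
  · refine iff_of_false (fun h => ?_) fun h => h 1 1 le_rfl le_rfl hn ?_
    · have hx := h (Finsupp.single (rainbow n le_rfl) 1) (by simp [tailSpan_self]) fun y _ => by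
        have : gramForm n 0 = 0 := Finsupp.lhom_ext fun a x => Finsupp.lhom_ext fun b y => by
          rw [gramForm_single_single, zero_pow (by have := one_le_kappa hn a b; omega)]
          simp
        rw [this]
        rfl
      simp at hx
    · rw [Nat.cast_one, one_mul, one_add_one_eq_two, Complex.cos_pi_div_two, mul_zero]
  · simp only [tailNondegenerate_iff hd le_rfl, quantumInt, ne_eq, eval_chebyshev_S_eq_zero_iff,
      not_exists, not_and]
    exact ⟨fun h m k hk hkm hm => h m hm k hk hkm, fun h m hm k hk hkm => h m k hk hkm hm⟩
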